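/- On ℝⁿ with the flat connection Γ ≡ 0, the real vector space of smooth solutions σ of the metrisability equation has dimension exactly (n+1)(n+2)/2; that is, the degree of mobility of the flat projective structure equals (n+1)(n+2)/2. -/

import Mathlib

/-!
The solutions are exactly the polynomial fields
`σ^{bc} = s^{bc} + x^b m^c + x^c m^b + r x^b x^c` with `s` symmetric, so they are parametrised
linearly and injectively by a symmetric bilinear form `(s, m, r)` on `ℝⁿ⁺¹`; such forms are encoded
as functions on `Sym2 (Option (Fin n))`, whose number of elements is `(n + 1) (n + 2) / 2`
(`flatSol`, `flatSol_injective`).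

That there are no further solutions follows by prolongation (`mu_affine`). Equality of mixed
second derivatives of `σ` gives `∂_a μ^b = δ_a^b ρ` for a function `ρ`; equality of mixed second derivatives of `μ`
gives `dρ = 0`, because `n ≥ 2` provides an index `b ≠ d` with `∂_d ρ = ∂_d ∂_b μ^b = ∂_b ∂_d μ^b`.
Hence `ρ = r` is constant, `μ^b - r x^b` is a constant `m^b`, and `σ` minus the
terms in `m` and `r` above has vanishing derivative.
-/

open scoped BigOperators

/-!  Common setup: we work on open subsets `U` of `ℝⁿ` (modelled as `Fin n → ℝ`).
A torsion-free affine connection is recorded through its Christoffel symbols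
`Γ x a b c = Γ_a{}^b{}_c`, symmetric in `a, c`.  `pd F a x` is the partial
derivative `∂_a F (x)`. -/

/-- Partial derivative `∂_a F` at `x`. -/
noncomputable def pd {n : ℕ} (F : (Fin n → ℝ) → ℝ) (a : Fin n) (x : Fin n → ℝ) : ℝ :=
  fderiv ℝ F x (Pi.single a 1)

/-- Kronecker delta. -/
def kron {n : ℕ} (a b : Fin n) : ℝ := if a = b then 1 else 0

/-- Curvature tensor `ρ_{ab}{}^c{}_d` of a connection with Christoffel symbols
`Γ x a b c = Γ_a{}^b{}_c`. -/
noncomputable def curv {n : ℕ} (Γ : (Fin n → ℝ) → Fin n → Fin n → Fin n → ℝ)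
    (x : Fin n → ℝ) (a b c d : Fin n) : ℝ :=
  pd (fun y => Γ y b c d) a x - pd (fun y => Γ y a c d) b x
    + ∑ e, Γ x a c e * Γ x b e d - ∑ e, Γ x b c e * Γ x a e d

/-- Ricci tensor `Ric_{ad} = ρ_{ba}{}^b{}_d`. -/
noncomputable def ricci {n : ℕ} (Γ : (Fin n → ℝ) → Fin n → Fin n → Fin n → ℝ)
    (x : Fin n → ℝ) (a d : Fin n) : ℝ :=
  ∑ b, curv Γ x b a b d

/-- Projective Schouten tensor `P_{ab} = Ric_{ab}/(n-1)`. -/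
noncomputable def projP {n : ℕ} (Γ : (Fin n → ℝ) → Fin n → Fin n → Fin n → ℝ)
    (x : Fin n → ℝ) (a b : Fin n) : ℝ :=
  ricci Γ x a b / ((n : ℝ) - 1)

/-- Projective Weyl tensor `W_{ab}{}^c{}_d = ρ_{ab}{}^c{}_d - δ_a{}^c P_{bd} + δ_b{}^c P_{ad}`. -/
noncomputable def projW {n : ℕ} (Γ : (Fin n → ℝ) → Fin n → Fin n → Fin n → ℝ)
    (x : Fin n → ℝ) (a b c d : Fin n) : ℝ :=
  curv Γ x a b c d - kron a c * projP Γ x b d + kron b c * projP Γ x a d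

/-- Covariant derivative `∇_a P_{bc}` of the projective Schouten tensor. -/
noncomputable def nablaP {n : ℕ} (Γ : (Fin n → ℝ) → Fin n → Fin n → Fin n → ℝ)
    (x : Fin n → ℝ) (a b c : Fin n) : ℝ :=
  pd (fun y => projP Γ y b c) a x - ∑ d, Γ x a d b * projP Γ x d c
    - ∑ d, Γ x a d c * projP Γ x b d

/-- Cotton–York tensor `Y_{abc} = ½(∇_a P_{bc} - ∇_b P_{ac})`. -/
noncomputable def cottonY {n : ℕ} (Γ : (Fin n → ℝ) → Fin n → Fin n → Fin n → ℝ)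
    (x : Fin n → ℝ) (a b c : Fin n) : ℝ :=
  (nablaP Γ x a b c - nablaP Γ x b a c) / 2

/-- Covariant derivative `∇_a σ^{bc}` of a contravariant symmetric 2-tensor field. -/
noncomputable def nablaSig {n : ℕ} (Γ : (Fin n → ℝ) → Fin n → Fin n → Fin n → ℝ)
    (σ : (Fin n → ℝ) → Fin n → Fin n → ℝ) (x : Fin n → ℝ) (a b c : Fin n) : ℝ :=
  pd (fun y => σ y b c) a x + ∑ d, Γ x a b d * σ x d c + ∑ d, Γ x a c d * σ x b d

/-- Covariant derivative `∇_a μ^b` of a vector field. -/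
noncomputable def nablaVec {n : ℕ} (Γ : (Fin n → ℝ) → Fin n → Fin n → Fin n → ℝ)
    (μ : (Fin n → ℝ) → Fin n → ℝ) (x : Fin n → ℝ) (a b : Fin n) : ℝ :=
  pd (fun y => μ y b) a x + ∑ c, Γ x a b c * μ x c

lemma pd_comm {n : ℕ} {F : (Fin n → ℝ) → ℝ} (hF : ContDiff ℝ (⊤ : ℕ∞) F) (a d : Fin n)
    (x : Fin n → ℝ) : pd (fun y => pd F a y) d x = pd (fun y => pd F d y) a x := by
  have hd : DifferentiableAt ℝ (fderiv ℝ F) x :=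
    ((hF.fderiv_right (m := 1) (by norm_cast)).differentiable (by norm_num)) x
  have key : ∀ a d : Fin n, pd (fun y => pd F a y) d x
      = fderiv ℝ (fderiv ℝ F) x (Pi.single d 1) (Pi.single a 1) := by
    intro a d
    unfold pd
    rw [fderiv_clm_apply hd (differentiableAt_const _)]
    simp
  rw [key, key]
  have hs : IsSymmSndFDerivAt ℝ F x :=
    (hF.contDiffAt).isSymmSndFDerivAt (by simp; norm_cast)
  exact hs _ _

lemma eq_of_pd_eq_zero {n : ℕ} {F : (Fin n → ℝ) → ℝ} (hF : Differentiable ℝ F)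
    (h : ∀ a x, pd F a x = 0) (x y : Fin n → ℝ) : F x = F y := by
  refine is_const_of_fderiv_eq_zero hF (fun z => ?_) x y
  ext v
  rw [← Finset.univ_sum_single v, map_sum]
  refine (Finset.sum_eq_zero fun i _ => ?_).trans rfl
  have : Pi.single i (v i) = (v i) • (Pi.single i 1 : Fin n → ℝ) := by
    rw [← Pi.single_smul]; simp
  rw [this, map_smul]
  have h' := h i z
  unfold pd at h'
  simp [h']

lemma pd_sub {n : ℕ} {F G : (Fin n → ℝ) → ℝ} (hF : Differentiable ℝ F) (hG : Differentiable ℝ G)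
    (a : Fin n) (x : Fin n → ℝ) : pd (fun y => F y - G y) a x = pd F a x - pd G a x := by
  unfold pd
  rw [fderiv_fun_sub (hF x) (hG x)]
  rfl

lemma pd_coord {n : ℕ} (r : ℝ) (a b : Fin n) (x : Fin n → ℝ) :
    pd (fun y => r * y b) a x = kron a b * r := by
  have h : HasFDerivAt (fun y : Fin n → ℝ => r * y b)
      (r • ContinuousLinearMap.proj (R := ℝ) (φ := fun _ : Fin n => ℝ) b) x :=
    (ContinuousLinearMap.proj (R := ℝ) (φ := fun _ : Fin n => ℝ) b).hasFDerivAt.const_mul r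
  unfold pd kron
  rw [h.fderiv]
  simp [Pi.single_apply, eq_comm]

/-- The derivative of the general solution, with `μ^c = m^c + r x^c` split into `p = m^b`
and `q = m^c`. -/
lemma pd_model {n : ℕ} (s p q r : ℝ) (a b c : Fin n) (x : Fin n → ℝ) :
    pd (fun y => s + y b * q + y c * p + r * y b * y c) a x
      = kron a b * (q + r * x c) + kron a c * (p + r * x b) := by
  have h : ∀ b, HasFDerivAt (fun y : Fin n → ℝ => y b)
      (ContinuousLinearMap.proj (R := ℝ) (φ := fun _ : Fin n => ℝ) b) x := fun b =>
    (ContinuousLinearMap.proj (R := ℝ) (φ := fun _ : Fin n => ℝ) b).hasFDerivAt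
  have H := ((((h b).mul_const q).const_add s).add ((h c).mul_const p)).add
    (((h b).const_mul r).mul (h c))
  unfold pd
  erw [H.fderiv]
  simp [Pi.single_apply, kron, eq_comm (a := a)]
  split_ifs <;> ring

/-- The solution attached to a symmetric bilinear form `A` on `ℝⁿ⁺¹`, recorded by its coefficients:
`s^{bc} = A s(some b, some c)`, `m^c = A s(none, some c)`, `r = A s(none, none)`. -/
def flatSol (n : ℕ) :
    (Sym2 (Option (Fin n)) → ℝ) →ₗ[ℝ] ((Fin n → ℝ) → Fin n → Fin n → ℝ) where
  toFun A x b c := A s(some b, some c) + x b * A s(none, some c) + x c * A s(none, some b)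
    + A s(none, none) * x b * x c
  map_add' A B := by
    funext x b c
    simp only [Pi.add_apply]
    ring
  map_smul' t A := by
    funext x b c
    simp only [Pi.smul_apply, smul_eq_mul, RingHom.id_apply]
    ring

lemma flatSol_injective {n : ℕ} (hn : 2 ≤ n) : Function.Injective (flatSol n) := by
  rw [injective_iff_map_eq_zero]
  intro A hA
  have h : ∀ (x : Fin n → ℝ) b c,
      A s(some b, some c) + x b * A s(none, some c) + x c * A s(none, some b)
      + A s(none, none) * x b * x c = 0 := fun x b c => congrFun (congrFun (congrFun hA x) b) c
  have hs : ∀ b c, A s(some b, some c) = 0 := fun b c => by simpa using h 0 b c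
  have hr : A s(none, none) = 0 := by
    have h1 := h (fun _ => 1) ⟨0, by omega⟩ ⟨0, by omega⟩
    have h2 := h (fun _ => -1) ⟨0, by omega⟩ ⟨0, by omega⟩
    rw [hs] at h1 h2
    linarith
  have hm : ∀ b, A s(none, some b) = 0 := fun b => by
    have h1 := h (fun _ => 1) b b
    rw [hs, hr] at h1
    linarith
  funext z
  induction z with
  | _ i j =>
    rcases i with _ | i <;> rcases j with _ | j
    · exact hr
    · exact hm j
    · rw [Sym2.eq_swap]; exact hm i
    · exact hs i j

/-- Prolongation: the vector field of a solution is affine, with linear part a multiple of the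
identity. -/
lemma mu_affine {n : ℕ} (hn : 2 ≤ n) {σ : (Fin n → ℝ) → Fin n → Fin n → ℝ}
    {μ : (Fin n → ℝ) → Fin n → ℝ} (hσ : ∀ b c, ContDiff ℝ (⊤ : ℕ∞) (fun x => σ x b c))
    (hμ : ∀ a, ContDiff ℝ (⊤ : ℕ∞) (fun x => μ x a))
    (h : ∀ x : Fin n → ℝ, ∀ a b c,
      pd (fun y => σ y b c) a x = kron a b * μ x c + kron a c * μ x b) :
    ∃ (r : ℝ) (m : Fin n → ℝ), ∀ x b, μ x b = m b + r * x b := by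
  have hdμ : ∀ a, Differentiable ℝ (fun x => μ x a) := fun a => (hμ a).differentiable (by simp)
  have zero : ∀ (a : Fin n) x, pd (fun _ => (0 : ℝ)) a x = 0 := fun a x => by simp [pd]
  have off : ∀ a d x, d ≠ a → pd (fun y => μ y a) d x = 0 := by
    intro a d x hda
    have e1 : (fun y => pd (fun y => σ y a a) a y) = fun y => μ y a + μ y a := by
      funext y; rw [h]; simp [kron]
    have e2 : (fun y => pd (fun y => σ y a a) d y) = fun _ => 0 := by
      funext y; rw [h]; simp [kron, hda]
    have e := pd_comm (hσ a a) a d x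
    rw [e1, e2, zero] at e
    unfold pd at e ⊢
    rw [fderiv_fun_add (hdμ a x) (hdμ a x)] at e
    simp only [add_apply] at e
    linarith
  have diag : ∀ a c x, pd (fun y => μ y a) a x = pd (fun y => μ y c) c x := by
    intro a c x
    by_cases hac : a = c
    · rw [hac]
    have e1 : (fun y => pd (fun y => σ y a c) a y) = fun y => μ y c := by
      funext y; rw [h]; simp [kron, hac]
    have e2 : (fun y => pd (fun y => σ y a c) c y) = fun y => μ y a := by
      funext y; rw [h]; simp [kron, Ne.symm hac]
    have e := pd_comm (hσ a c) a c x
    rw [e1, e2] at e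
    exact e.symm
  have : Nontrivial (Fin n) := Fin.nontrivial_iff_two_le.mpr hn
  let o : Fin n := ⟨0, by omega⟩
  have hρ : ∀ d x, pd (fun y => pd (fun z => μ z o) o y) d x = 0 := by
    intro d x
    obtain ⟨b, hb⟩ := exists_ne d
    have e1 : (fun y => pd (fun z => μ z o) o y) = fun y => pd (fun z => μ z b) b y := by
      funext y; exact diag o b y
    have e2 : (fun y => pd (fun z => μ z b) d y) = fun _ => 0 := by
      funext y; exact off b d y hb.symm
    rw [e1, pd_comm (hμ b), e2, zero]
  have hρd : Differentiable ℝ (fun y => pd (fun z => μ z o) o y) := by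
    have := ((hμ o).fderiv_right (m := 1) (by norm_cast)).differentiable (by norm_num)
    unfold pd
    fun_prop
  refine ⟨pd (fun z => μ z o) o 0, fun b => μ 0 b, fun x b => ?_⟩
  set r := pd (fun z => μ z o) o 0 with hr
  have hrx : ∀ y, pd (fun z => μ z o) o y = r := fun y => eq_of_pd_eq_zero hρd hρ y 0
  have e := eq_of_pd_eq_zero (F := fun y => μ y b - r * y b) ((hdμ b).sub (by fun_prop))
    (fun a y => by
      rw [pd_sub (hdμ b) (by fun_prop), pd_coord]
      by_cases hab : a = b
      · subst hab
        rw [diag a o, hrx]; simp [kron]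
      · rw [off b a y hab]; simp [kron, hab]) x 0
  simp at e
  linarith


/-- on `ℝⁿ` with the flat connection, the space of smooth
solutions of the metrisability equation has dimension exactly `(n+1)(n+2)/2`:
the degree of mobility of the flat projective structure. -/
theorem flat_degree_of_mobility
    {n : ℕ} (hn : 2 ≤ n) :
    ∃ T : Submodule ℝ ((Fin n → ℝ) → Fin n → Fin n → ℝ),
      (↑T = {σ : (Fin n → ℝ) → Fin n → Fin n → ℝ |
        (∀ b c, ContDiff ℝ (⊤ : ℕ∞) (fun x => σ x b c)) ∧
        (∀ x b c, σ x b c = σ x c b) ∧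
        (∃ μ : (Fin n → ℝ) → Fin n → ℝ,
          (∀ a, ContDiff ℝ (⊤ : ℕ∞) (fun x => μ x a)) ∧
          ∀ x : Fin n → ℝ, ∀ a b c,
            pd (fun y => σ y b c) a x = kron a b * μ x c + kron a c * μ x b)}) ∧
      Module.finrank ℝ ↥T = (n + 1) * (n + 2) / 2 := by
  refine ⟨LinearMap.range (flatSol n), ?_, ?_⟩
  · ext σ
    simp only [SetLike.mem_coe, LinearMap.mem_range, Set.mem_ofPred_eq]
    constructor
    · rintro ⟨A, rfl⟩
      refine ⟨fun b c => ?_, fun x b c => ?_,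
        fun x b => A s(none, some b) + A s(none, none) * x b, fun a => ?_, fun x a b c => ?_⟩
      · simp only [flatSol, LinearMap.coe_mk, AddHom.coe_mk]
        fun_prop
      · simp only [flatSol, LinearMap.coe_mk, AddHom.coe_mk, Sym2.eq_swap (a := some b)]
        ring
      · fun_prop
      · exact pd_model _ _ _ _ a b c x
    · rintro ⟨hσ, hsymm, μ, hμ, h⟩
      obtain ⟨r, m, hm⟩ := mu_affine hn hσ hμ h
      refine ⟨Sym2.lift ⟨fun i j => match i, j with
        | some b, some c => σ 0 b c
        | none, some c => m c
        | some b, none => m b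
        | none, none => r, ?_⟩, ?_⟩
      · rintro (_ | i) (_ | j)
        · rfl
        · rfl
        · rfl
        · exact hsymm 0 i j
      · funext x b c
        have e := eq_of_pd_eq_zero
          (F := fun y => σ y b c - (σ 0 b c + y b * m c + y c * m b + r * y b * y c))
          (((hσ b c).differentiable (by simp)).sub (by fun_prop))
          (fun a y => by
            rw [pd_sub ((hσ b c).differentiable (by simp)) (by fun_prop), h, pd_model, hm, hm]
            ring) x 0
        simp at e
        simp only [flatSol, LinearMap.coe_mk, AddHom.coe_mk, Sym2.lift_mk]
        linarith
  · rw [LinearMap.finrank_range_of_inj (flatSol_injective hn), Module.finrank_fintype_fun_eq_card,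
      Sym2.card, Fintype.card_option, Fintype.card_fin, Nat.choose_two_right, Nat.mul_comm]
    rfl
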